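/- Every simple C_k-algebra is finite. That is, if (A, t) is a C_k-algebra with 0 ≠ 1 whose only c-filters are {1} and A, then the underlying set A is finite. -/

import Mathlib

universe u

/-- Modal pseudocomplemented De Morgan algebra (mpM-algebra). -/
class MpM (A : Type u) extends DistribLattice A, BoundedOrder A where
  dm : A → A   -- De Morgan negation ∼
  ps : A → A   -- pseudocomplement *
  dm_dm : ∀ x : A, dm (dm x) = x
  dm_sup : ∀ x y : A, dm (x ⊔ y) = dm x ⊓ dm y
  pseudo : ∀ a x : A, a ⊓ x = ⊥ ↔ x ≤ ps a
  modal : ∀ x : A, x ⊔ dm x ≤ x ⊔ ps x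

open MpM

variable {A : Type u} [MpM A]

/-- ∇x = ∼(∼x ∧ x*) -/
def nabla (x : A) : A := dm (dm x ⊓ ps x)

/-- △x = ∼∇∼x -/
def tri (x : A) : A := dm (nabla (dm x))

/-- A C_k-algebra structure on an mpM-algebra `A`: an automorphism `t` with `t^k = id`. -/
structure CkStr (A : Type u) [MpM A] (k : ℕ) where
  t : A → A
  bij : Function.Bijective t
  map_inf : ∀ x y : A, t (x ⊓ y) = t x ⊓ t y
  map_sup : ∀ x y : A, t (x ⊔ y) = t x ⊔ t y
  map_dm : ∀ x : A, t (dm x) = dm (t x)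
  map_ps : ∀ x : A, t (ps x) = ps (t x)
  map_bot : t (⊥ : A) = ⊥
  map_top : t (⊤ : A) = ⊤
  periodic : ∀ x : A, t^[k] x = x

/-- Lattice filter: nonempty, upward closed, closed under binary meets. -/
def IsLatFilter (F : Set A) : Prop :=
  F.Nonempty ∧ (∀ x ∈ F, ∀ y : A, x ≤ y → y ∈ F) ∧ ∀ x ∈ F, ∀ y ∈ F, x ⊓ y ∈ F

/-- c-filter: a filter closed under △ and t. -/
def IsCFilter {k : ℕ} (T : CkStr A k) (F : Set A) : Prop :=
  IsLatFilter F ∧ ∀ x ∈ F, tri x ∈ F ∧ T.t x ∈ F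

/-- maximal c-filter: proper and not properly contained in a proper c-filter. -/
def IsMaxCFilter {k : ℕ} (T : CkStr A k) (N : Set A) : Prop :=
  IsCFilter T N ∧ N ≠ Set.univ ∧
    ∀ G : Set A, IsCFilter T G → G ≠ Set.univ → N ⊆ G → N = G

/-- prime filter -/
def IsPrimeFilter (P : Set A) : Prop :=
  IsLatFilter P ∧ P ≠ Set.univ ∧ ∀ x y : A, x ⊔ y ∈ P → x ∈ P ∨ y ∈ P

/-- ultrafilter: maximal proper (lattice) filter -/
def IsUltraFilter (U : Set A) : Prop :=
  IsLatFilter U ∧ U ≠ Set.univ ∧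
    ∀ G : Set A, IsLatFilter G → G ≠ Set.univ → U ⊆ G → U = G

/-- Birula–Rasiowa transformation φ(P) = A \ {∼x : x ∈ P}. -/
def brPhi (P : Set A) : Set A := Set.univ \ (dm '' P)

/-- a ⇁ b = (⋁_{i=1}^{k} ∇(∼ t^i(a))) ∨ b -/
def rimp {k : ℕ} (T : CkStr A k) (a b : A) : A :=
  ((Finset.Icc 1 k).sup fun i => nabla (dm (T.t^[i] a))) ⊔ b

/-- cyclic deductive system -/
def IsCDS {k : ℕ} (T : CkStr A k) (D : Set A) : Prop :=
  (⊤ : A) ∈ D ∧ ∀ x ∈ D, ∀ y : A, rimp T x y ∈ D → y ∈ D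

/-- maximal cyclic deductive system -/
def IsMaxCDS {k : ℕ} (T : CkStr A k) (M : Set A) : Prop :=
  IsCDS T M ∧ M ≠ Set.univ ∧
    ∀ G : Set A, IsCDS T G → G ≠ Set.univ → M ⊆ G → M = G

/-- the smallest cyclic deductive system containing `X` -/
def genCDS {k : ℕ} (T : CkStr A k) (X : Set A) : Set A :=
  ⋂₀ {D : Set A | IsCDS T D ∧ X ⊆ D}

/-- K(A) = {x : t(x) = x and ∇x = x} -/
def Kset {k : ℕ} (T : CkStr A k) : Set A := {x : A | T.t x = x ∧ nabla x = x}

/-- consistency operator ∘x = ⋀_{i=0}^{k} t^i((∼x ∨ x) ∧ (x ∧ ∼x)*) -/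
def cCirc {k : ℕ} (T : CkStr A k) (x : A) : A :=
  (Finset.Icc 0 k).inf fun i => T.t^[i] ((dm x ⊔ x) ⊓ ps (x ⊓ dm x))

/-- x → y = ∼((∼(x∨y))* ∧ (x∨y)) ∨ ((∼(x∧y))* ∧ (x∧y)) -/
def mpTo (x y : A) : A :=
  dm (ps (dm (x ⊔ y)) ⊓ (x ⊔ y)) ⊔ (ps (dm (x ⊓ y)) ⊓ (x ⊓ y))

/-- x ⇒ y = (x → y) ∧ (∼y → ∼x) -/
def mpIff (x y : A) : A := mpTo x y ⊓ mpTo (dm y) (dm x)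

/-!
The modal law forces the poset of prime filters to have length at most one: if `P ⊆ Q` are prime
filters, then `Q = P` or `Q = φ(P)`, where `φ` is the Birula–Rasiowa transformation. Moreover
`△x ∈ P` exactly when `x ∈ P ∩ φ(P)`. Hence, if `S` is a set of prime filters stable under `φ` and
under preimage by `t`, then `⋂₀ S` is a c-filter. Take for `S` the orbit of a single prime filter,
which is finite because `t` is periodic. In a simple algebra `⋂₀ S = {⊤}` lies below every prime
filter `Q`, so by prime avoidance some `P ∈ S` is contained in `Q`, and then `Q ∈ {P, φ(P)} ⊆ S`.
So the algebra has finitely many prime filters, and these separate its points.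
-/

namespace MpM

theorem dm_antitone : Antitone (dm : A → A) := fun x y hxy =>
  calc dm y = dm x ⊓ dm y := by rw [← dm_sup, sup_eq_right.mpr hxy]
    _ ≤ dm x := inf_le_left

theorem dm_inf (x y : A) : dm (x ⊓ y) = dm x ⊔ dm y := by
  rw [← dm_dm (dm x ⊔ dm y), dm_sup, dm_dm, dm_dm]

theorem dm_bot : dm (⊥ : A) = ⊤ :=
  top_le_iff.mp <| calc
    (⊤ : A) = dm (dm ⊤) := (dm_dm ⊤).symm
    _ ≤ dm ⊥ := dm_antitone bot_le

theorem dm_top : dm (⊤ : A) = ⊥ := by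
  rw [← dm_bot, dm_dm]

theorem inf_ps_self (x : A) : x ⊓ ps x = ⊥ :=
  (pseudo x (ps x)).mpr le_rfl

end MpM

theorem tri_eq_inf_ps_dm (x : A) : tri x = x ⊓ ps (dm x) := by
  simp only [tri, nabla, dm_dm]

namespace IsLatFilter

variable {F : Set A}

theorem isUpperSet (hF : IsLatFilter F) : IsUpperSet F :=
  fun x y hxy hx => hF.2.1 x hx y hxy

theorem top_mem (hF : IsLatFilter F) : ⊤ ∈ F :=
  hF.isUpperSet.top_mem.mpr hF.1

theorem bot_mem_iff (hF : IsLatFilter F) : ⊥ ∈ F ↔ F = Set.univ :=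
  hF.isUpperSet.bot_mem

theorem inf_mem_iff (hF : IsLatFilter F) {x y : A} : x ⊓ y ∈ F ↔ x ∈ F ∧ y ∈ F :=
  ⟨fun h => ⟨hF.isUpperSet inf_le_left h, hF.isUpperSet inf_le_right h⟩,
    fun h => hF.2.2 x h.1 y h.2⟩

theorem subset_or_subset_of_subset_union {U V : Set A} (hF : IsLatFilter F)
    (hU : IsUpperSet U) (hV : IsUpperSet V) (h : F ⊆ U ∪ V) : F ⊆ U ∨ F ⊆ V := by
  by_contra! hcon
  obtain ⟨a, haF, haU⟩ := Set.not_subset.mp hcon.1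
  obtain ⟨b, hbF, hbV⟩ := Set.not_subset.mp hcon.2
  rcases h (hF.inf_mem_iff.mpr ⟨haF, hbF⟩) with hab | hab
  · exact haU (hU inf_le_left hab)
  · exact hbV (hV inf_le_right hab)

theorem sInter {S : Set (Set A)} (hS : ∀ F ∈ S, IsLatFilter F) : IsLatFilter (⋂₀ S) :=
  ⟨⟨⊤, fun F hF => (hS F hF).top_mem⟩,
    fun _ hx _ hxy F hF => (hS F hF).isUpperSet hxy (hx F hF),
    fun _ hx _ hy F hF => (hS F hF).inf_mem_iff.mpr ⟨hx F hF, hy F hF⟩⟩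

end IsLatFilter

namespace IsPrimeFilter

variable {P : Set A}

theorem bot_notMem (hP : IsPrimeFilter P) : ⊥ ∉ P :=
  hP.1.bot_mem_iff.not.mpr hP.2.1

theorem sup_mem_iff (hP : IsPrimeFilter P) {x y : A} : x ⊔ y ∈ P ↔ x ∈ P ∨ y ∈ P :=
  ⟨hP.2.2 x y, fun h => h.elim (hP.1.isUpperSet le_sup_left) (hP.1.isUpperSet le_sup_right)⟩

theorem exists_mem_of_finset_sup_mem {ι : Type*} (hP : IsPrimeFilter P) {s : Finset ι} {f : ι → A}
    (h : s.sup f ∈ P) : ∃ i ∈ s, f i ∈ P := by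
  by_contra! hcon
  refine Finset.sup_induction (p := (· ∉ P)) hP.bot_notMem (fun x hx y hy hxy => ?_) hcon h
  exact (hP.sup_mem_iff.mp hxy).elim hx hy

theorem exists_subset_of_sInter_subset (hP : IsPrimeFilter P) {S : Set (Set A)} (hfin : S.Finite)
    (hS : ∀ U ∈ S, IsUpperSet U) (h : ⋂₀ S ⊆ P) : ∃ U ∈ S, U ⊆ P := by
  by_contra! hcon
  choose! a haU haP using fun U hU => Set.not_subset.mp (hcon U hU)
  have sup_mem_sInter : hfin.toFinset.sup a ∈ ⋂₀ S := fun U hU =>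
    hS U hU (Finset.le_sup (hfin.mem_toFinset.mpr hU)) (haU U hU)
  obtain ⟨U, hU, haUP⟩ := hP.exists_mem_of_finset_sup_mem (h sup_mem_sInter)
  exact haP U (hfin.mem_toFinset.mp hU) haUP

theorem preimage {B : Type*} [MpM B] {F : Type*} [FunLike F B A] [BoundedLatticeHomClass F B A]
    (hP : IsPrimeFilter P) (f : F) : IsPrimeFilter (f ⁻¹' P) := by
  refine ⟨⟨⟨⊤, ?_⟩, fun x hx y hxy => ?_, fun x hx y hy => ?_⟩, fun huniv => ?_, fun x y hxy => ?_⟩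
  · simpa only [Set.mem_preimage, map_top] using hP.1.top_mem
  · exact hP.1.isUpperSet (OrderHomClass.mono f hxy) hx
  · simpa only [Set.mem_preimage, map_inf] using hP.1.inf_mem_iff.mpr ⟨hx, hy⟩
  · have bot_mem : f ⊥ ∈ P := Set.eq_univ_iff_forall.mp huniv ⊥
    exact hP.bot_notMem (map_bot f ▸ bot_mem)
  · rwa [Set.mem_preimage, map_sup, hP.sup_mem_iff] at hxy

theorem ps_notMem (hP : IsPrimeFilter P) {x : A} (hx : x ∈ P) : ps x ∉ P := fun hps =>
  hP.bot_notMem (inf_ps_self x ▸ hP.1.inf_mem_iff.mpr ⟨hx, hps⟩)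

theorem mem_or_ps_mem_of_dm_mem (hP : IsPrimeFilter P) {x : A} (hx : dm x ∈ P) :
    x ∈ P ∨ ps x ∈ P :=
  hP.sup_mem_iff.mp (hP.1.isUpperSet (le_sup_right.trans (modal x)) hx)

end IsPrimeFilter

theorem isPrimeFilter_compl {J : Order.Ideal A} (hJ : J.IsPrime) :
    IsPrimeFilter ((J : Set A)ᶜ) := by
  refine ⟨⟨⟨⊤, hJ.toIsProper.top_notMem⟩, fun x hx y hxy => ?_, fun x hx y hy hxy => ?_⟩,
    fun huniv => ?_, fun x y hxy => ?_⟩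
  · exact Order.Ideal.mem_compl_of_ge hxy hx
  · exact (hJ.mem_or_mem hxy).elim hx hy
  · exact (Set.eq_univ_iff_forall.mp huniv ⊥) J.bot_mem
  · by_contra! hcon
    exact hxy <|
      Order.Ideal.sup_mem (Set.notMem_compl_iff.mp hcon.1) (Set.notMem_compl_iff.mp hcon.2)

theorem exists_isPrimeFilter_of_not_le {x y : A} (h : ¬x ≤ y) :
    ∃ P : Set A, IsPrimeFilter P ∧ x ∈ P ∧ y ∉ P := by
  have hdisj : Disjoint (Order.PFilter.principal x : Set A) (Order.Ideal.principal y : Set A) :=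
    Set.disjoint_left.mpr fun z hxz hzy => h (le_trans hxz hzy)
  obtain ⟨J, hJ, hyJ, hxJ⟩ := DistribLattice.prime_ideal_of_disjoint_filter_ideal hdisj
  refine ⟨(J : Set A)ᶜ, isPrimeFilter_compl hJ, ?_, ?_⟩
  · exact Set.disjoint_left.mp hxJ (Order.PFilter.mem_principal.mpr le_rfl)
  · exact not_not.mpr (hyJ (Order.Ideal.mem_principal.mpr le_rfl))

theorem finite_of_finite_setOf_isPrimeFilter (h : {P : Set A | IsPrimeFilter P}.Finite) :
    Finite A := by
  have : Finite {P : Set A | IsPrimeFilter P} := h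
  let primesOf (x : A) : Set {P : Set A | IsPrimeFilter P} := {P | x ∈ P.1}
  have le_of_primesOf_eq (x y : A) (hxy : primesOf x = primesOf y) : x ≤ y := by
    by_contra hle
    obtain ⟨P, hP, hxP, hyP⟩ := exists_isPrimeFilter_of_not_le hle
    exact hyP ((Set.ext_iff.mp hxy ⟨P, hP⟩).mp hxP)
  exact Finite.of_injective primesOf fun x y hxy =>
    le_antisymm (le_of_primesOf_eq x y hxy) (le_of_primesOf_eq y x hxy.symm)

section BirulaRasiowa

variable {P Q : Set A}

theorem mem_brPhi {x : A} : x ∈ brPhi P ↔ dm x ∉ P := by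
  have mem_image : x ∈ dm '' P ↔ dm x ∈ P :=
    ⟨fun ⟨y, hy, hyx⟩ => by rwa [← hyx, dm_dm], fun hx => ⟨dm x, hx, dm_dm x⟩⟩
  rw [brPhi, Set.mem_sdiff, mem_image]
  exact and_iff_right (Set.mem_univ x)

theorem brPhi_brPhi (P : Set A) : brPhi (brPhi P) = P := by
  ext x
  rw [mem_brPhi, mem_brPhi, dm_dm, not_not]

theorem brPhi_antitone : Antitone (brPhi : Set A → Set A) := fun _ _ hPQ _ hx =>
  mem_brPhi.mpr fun hdm => mem_brPhi.mp hx (hPQ hdm)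

theorem brPhi_preimage {B : Type*} [MpM B] {f : B → A} (hf : ∀ x, f (dm x) = dm (f x))
    (P : Set A) : brPhi (f ⁻¹' P) = f ⁻¹' brPhi P := by
  ext x
  rw [mem_brPhi, Set.mem_preimage, hf, Set.mem_preimage, mem_brPhi]

theorem isPrimeFilter_brPhi (hP : IsPrimeFilter P) : IsPrimeFilter (brPhi P) := by
  refine ⟨⟨⟨⊤, ?_⟩, fun x hx y hxy => ?_, fun x hx y hy => ?_⟩, fun huniv => ?_, fun x y hxy => ?_⟩
  · rw [mem_brPhi, dm_top]
    exact hP.bot_notMem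
  · exact mem_brPhi.mpr fun hy => mem_brPhi.mp hx (hP.1.isUpperSet (dm_antitone hxy) hy)
  · rw [mem_brPhi, dm_inf, hP.sup_mem_iff, not_or]
    exact ⟨mem_brPhi.mp hx, mem_brPhi.mp hy⟩
  · have dm_bot_notMem : dm ⊥ ∉ P := mem_brPhi.mp (Set.eq_univ_iff_forall.mp huniv ⊥)
    exact dm_bot_notMem (dm_bot (A := A) ▸ hP.1.top_mem)
  · rwa [mem_brPhi, dm_sup, hP.1.inf_mem_iff, not_and_or, ← mem_brPhi, ← mem_brPhi] at hxy

namespace IsPrimeFilter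

theorem tri_mem_iff (hP : IsPrimeFilter P) {x : A} : tri x ∈ P ↔ x ∈ P ∧ x ∈ brPhi P := by
  rw [tri_eq_inf_ps_dm, hP.1.inf_mem_iff, mem_brPhi]
  refine and_congr_right fun hx => ⟨fun hps hdm => hP.ps_notMem hdm hps, fun hdm => ?_⟩
  exact (hP.mem_or_ps_mem_of_dm_mem ((dm_dm x).symm ▸ hx)).resolve_left hdm

theorem subset_union_brPhi (hP : IsPrimeFilter P) (hQ : IsPrimeFilter Q) (hPQ : P ⊆ Q) :
    Q ⊆ P ∪ brPhi P := by
  intro a haQ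
  by_contra hcon
  obtain ⟨haP, haφP⟩ := not_or.mp hcon
  have hdmP : dm a ∈ P := not_not.mp (mem_brPhi.not.mp haφP)
  have hpsP : ps a ∈ P := (hP.mem_or_ps_mem_of_dm_mem hdmP).resolve_left haP
  exact hQ.ps_notMem haQ (hPQ hpsP)

theorem subset_or_subset_brPhi (hP : IsPrimeFilter P) (hQ : IsPrimeFilter Q) (hPQ : P ⊆ Q) :
    Q ⊆ P ∨ Q ⊆ brPhi P :=
  hQ.1.subset_or_subset_of_subset_union hP.1.isUpperSet (isPrimeFilter_brPhi hP).1.isUpperSet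
    (hP.subset_union_brPhi hQ hPQ)

theorem eq_or_eq_brPhi_of_subset (hP : IsPrimeFilter P) (hQ : IsPrimeFilter Q) (hPQ : P ⊆ Q) :
    Q = P ∨ Q = brPhi P := by
  rcases hP.subset_or_subset_brPhi hQ hPQ with hQP | hQφP
  · exact Or.inl (hQP.antisymm hPQ)
  · rcases hQ.subset_or_subset_brPhi (isPrimeFilter_brPhi hP) hQφP with hφPQ | hφPφQ
    · exact Or.inr (hQφP.antisymm hφPQ)
    · have hQP : Q ⊆ P := by
        simpa only [brPhi_brPhi] using brPhi_antitone hφPφQ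
      exact Or.inl (hQP.antisymm hPQ)

theorem mem_of_sInter_subset (hQ : IsPrimeFilter Q) {S : Set (Set A)} (hfin : S.Finite)
    (hprime : ∀ P ∈ S, IsPrimeFilter P) (hbrPhi : ∀ P ∈ S, brPhi P ∈ S) (h : ⋂₀ S ⊆ Q) :
    Q ∈ S := by
  obtain ⟨P, hPS, hPQ⟩ :=
    hQ.exists_subset_of_sInter_subset hfin (fun P hP => (hprime P hP).1.isUpperSet) h
  rcases (hprime P hPS).eq_or_eq_brPhi_of_subset hQ hPQ with rfl | rfl
  · exact hPS
  · exact hbrPhi P hPS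

end IsPrimeFilter

end BirulaRasiowa

theorem finite_range_iterate_of_isPeriodicPt {α : Type*} {f : α → α} {k : ℕ} {x : α} (hk : 0 < k)
    (hx : Function.IsPeriodicPt f k x) : (Set.range fun i => f^[i] x).Finite := by
  refine ((Set.finite_lt_nat k).image fun i => f^[i] x).subset ?_
  rintro _ ⟨i, rfl⟩
  exact ⟨i % k, Nat.mod_lt i hk, hx.iterate_mod_apply i⟩

namespace CkStr

variable {k : ℕ} (T : CkStr A k) {P Q : Set A}

theorem isCFilter_sInter {S : Set (Set A)} (hprime : ∀ P ∈ S, IsPrimeFilter P)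
    (hbrPhi : ∀ P ∈ S, brPhi P ∈ S) (hpreimage : ∀ P ∈ S, T.t ⁻¹' P ∈ S) :
    IsCFilter T (⋂₀ S) :=
  ⟨IsLatFilter.sInter fun P hP => (hprime P hP).1, fun _ hx =>
    ⟨fun P hP => (hprime P hP).tri_mem_iff.mpr ⟨hx P hP, hx _ (hbrPhi P hP)⟩,
      fun P hP => hx _ (hpreimage P hP)⟩⟩

/-- The automorphism of a `C_k`-algebra as a homomorphism of bounded lattices, through which it
acts on prime filters by preimage. -/
def toBoundedLatticeHom : BoundedLatticeHom A A where
  toFun := T.t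
  map_sup' := T.map_sup
  map_inf' := T.map_inf
  map_top' := T.map_top
  map_bot' := T.map_bot

/-- The orbit of a set `P` under preimage by `t` and the Birula–Rasiowa transformation `φ`. As `φ`
is an involution commuting with preimage by `t`, it suffices to iterate preimages of `P` and of
`φ(P)`. -/
def brOrbit (P : Set A) : Set (Set A) :=
  (Set.range fun i => (Set.preimage T.t)^[i] P) ∪
    Set.range fun i => (Set.preimage T.t)^[i] (brPhi P)

theorem mem_brOrbit_self (P : Set A) : P ∈ T.brOrbit P :=
  Or.inl ⟨0, rfl⟩

theorem preimage_mem_brOrbit (hQ : Q ∈ T.brOrbit P) : T.t ⁻¹' Q ∈ T.brOrbit P := by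
  rcases hQ with ⟨i, rfl⟩ | ⟨i, rfl⟩
  · exact Or.inl ⟨i + 1, Function.iterate_succ_apply' _ i P⟩
  · exact Or.inr ⟨i + 1, Function.iterate_succ_apply' _ i (brPhi P)⟩

theorem brPhi_mem_brOrbit (hQ : Q ∈ T.brOrbit P) : brPhi Q ∈ T.brOrbit P := by
  have brPhi_commute : Function.Commute brPhi (Set.preimage T.t) := brPhi_preimage T.map_dm
  rcases hQ with ⟨i, rfl⟩ | ⟨i, rfl⟩
  · exact Or.inr ⟨i, ((brPhi_commute.iterate_right i).eq P).symm⟩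
  · have brPhi_iterate := (brPhi_commute.iterate_right i).eq (brPhi P)
    rw [brPhi_brPhi] at brPhi_iterate
    exact Or.inl ⟨i, brPhi_iterate.symm⟩

theorem isPrimeFilter_of_mem_brOrbit (hP : IsPrimeFilter P) (hQ : Q ∈ T.brOrbit P) :
    IsPrimeFilter Q := by
  have isPrimeFilter_preimage (R : Set A) (hR : IsPrimeFilter R) : IsPrimeFilter (T.t ⁻¹' R) :=
    hR.preimage T.toBoundedLatticeHom
  rcases hQ with ⟨i, rfl⟩ | ⟨i, rfl⟩
  · exact Function.Iterate.rec IsPrimeFilter hP isPrimeFilter_preimage i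
  · exact Function.Iterate.rec IsPrimeFilter (isPrimeFilter_brPhi hP) isPrimeFilter_preimage i

theorem isPeriodicPt_preimage (P : Set A) : Function.IsPeriodicPt (Set.preimage T.t) k P := by
  have iterate_eq_id : T.t^[k] = id := funext T.periodic
  rw [Function.IsPeriodicPt, Function.IsFixedPt, ← Set.preimage_iterate_eq, iterate_eq_id,
    Set.preimage_id]

theorem finite_brOrbit (hk : 0 < k) (P : Set A) : (T.brOrbit P).Finite :=
  (finite_range_iterate_of_isPeriodicPt hk (T.isPeriodicPt_preimage P)).union
    (finite_range_iterate_of_isPeriodicPt hk (T.isPeriodicPt_preimage (brPhi P)))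

end CkStr

theorem stmt15 {k : ℕ} (hk : 0 < k) (T : CkStr A k) (hnt : (⊥ : A) ≠ ⊤)
    (hsimple : ∀ F : Set A, IsCFilter T F → F = {(⊤ : A)} ∨ F = Set.univ) :
    Finite A := by
  obtain ⟨P, hP, -, -⟩ := exists_isPrimeFilter_of_not_le (fun h => hnt (le_bot_iff.mp h).symm)
  have hprime : ∀ Q ∈ T.brOrbit P, IsPrimeFilter Q := fun Q => T.isPrimeFilter_of_mem_brOrbit hP
  have hbrPhi : ∀ Q ∈ T.brOrbit P, brPhi Q ∈ T.brOrbit P := fun Q => T.brPhi_mem_brOrbit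
  have hcfilter : IsCFilter T (⋂₀ T.brOrbit P) :=
    T.isCFilter_sInter hprime hbrPhi fun Q => T.preimage_mem_brOrbit
  have hproper : ⋂₀ T.brOrbit P ≠ Set.univ := fun huniv =>
    hP.2.1 (Set.sInter_eq_univ.mp huniv P (T.mem_brOrbit_self P))
  have htrivial : ⋂₀ T.brOrbit P = {⊤} := (hsimple _ hcfilter).resolve_right hproper
  have hfin : (T.brOrbit P).Finite := T.finite_brOrbit hk P
  refine finite_of_finite_setOf_isPrimeFilter (hfin.subset fun Q hQ => ?_)
  refine hQ.mem_of_sInter_subset hfin hprime hbrPhi ?_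
  rw [htrivial, Set.singleton_subset_iff]
  exact hQ.1.top_mem
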